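/- Let c = 2π√(5/12). There exists a constant C > 0 such that for all positive integers k, n with k ≤ n, D(k,n) ≤ C · k^{−2} · e^{c√k}, where D(k,n) := π(k,n) − π(k−1,n). -/

import Mathlib

open Finset

/-- A pair of sequences of parts is *steadily decreasing* if
`min (a i) (b i) ≥ max (a (i+1)) (b (i+1))` for all `i`. -/
noncomputable def SteadilyDecreasing (a b : ℕ → ℕ) : Prop :=
  ∀ i, max (a (i + 1)) (b (i + 1)) ≤ min (a i) (b i)

/-- `bipartitePi m n` is the number of pairs of partitions (given as non-increasing,
finitely supported sequences) of the bipartite number `(m, n)` with steadily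
decreasing parts. -/
noncomputable def bipartitePi (m n : ℕ) : ℕ :=
  Nat.card {p : (ℕ →₀ ℕ) × (ℕ →₀ ℕ) //
    (∀ i, p.1 (i + 1) ≤ p.1 i) ∧ (∀ i, p.2 (i + 1) ≤ p.2 i) ∧
    SteadilyDecreasing p.1 p.2 ∧
    (p.1.sum fun _ x => x) = m ∧ (p.2.sum fun _ x => x) = n}

/-- The partition function `p n`. -/
noncomputable def partitionCount (n : ℕ) : ℕ := Nat.card (Nat.Partition n)

/-- The partition function extended to the integers, with `p r = 0` for `r < 0`. -/
noncomputable def partitionCountInt (r : ℤ) : ℕ := if 0 ≤ r then partitionCount r.toNat else 0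

/-- The cubic partition function `c n`, counting partitions of `n` in which even
parts come in two colors (equivalently, pairs of a partition together with a
partition into even parts, of total size `n`). -/
noncomputable def cubicPartition (n : ℕ) : ℕ :=
  Nat.card {p : Multiset ℕ × Multiset ℕ //
    (∀ i ∈ p.1, 0 < i) ∧ (∀ i ∈ p.2, 0 < i ∧ Even i) ∧ p.1.sum + p.2.sum = n}

/-- The Andrews–Garvan crank of a partition: the largest part if there are no ones,
and otherwise the number of parts larger than the number of ones minus the number of
ones. -/
noncomputable def crank {n : ℕ} (l : n.Partition) : ℤ :=
  if l.parts.count 1 = 0 then (l.parts.sup : ℤ)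
  else ((l.parts.filter fun p => l.parts.count 1 < p).card : ℤ) - l.parts.count 1

/-- `crankM m n` is the crank counting function `M(m, n)`: the number of partitions
of `n` with crank `m`, with the standard convention at `n = 1`
(`M(0,1) = -1`, `M(±1,1) = 1`, `M(m,1) = 0` otherwise). -/
noncomputable def crankM (m : ℤ) (n : ℕ) : ℤ :=
  if n = 1 then (if m = 0 then -1 else if m.natAbs = 1 then 1 else 0)
  else (Nat.card {l : n.Partition // crank l = m} : ℤ)

/-- `alphaBip s k = Σ_{ℓ ≥ 0} (-1)^ℓ p(k - ℓ(ℓ+1)/2 - ℓ s)`. -/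
noncomputable def alphaBip (s k : ℕ) : ℤ :=
  ∑' ℓ : ℕ, (-1 : ℤ) ^ ℓ *
    (partitionCountInt ((k : ℤ) - ℓ * (ℓ + 1) / 2 - ℓ * s) : ℤ)

/-- `Dbip m n = π(m,n) - π(m-1,n)`, with `π(-1,n) := 0`. -/
noncomputable def Dbip (m n : ℕ) : ℤ :=
  (bipartitePi m n : ℤ) - if m = 0 then 0 else (bipartitePi (m - 1) n : ℤ)

/-!
Lowering `α₁` by one is possible unless `α₁ = max α₂ β₂`, so `D(k, n)` counts the *tight* pairs,
those with equality. From the bottom up, a tight pair is built from independent choices, one per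
level `i ≥ 1`: a gap `min αᵢ βᵢ - max αᵢ₊₁ βᵢ₊₁` and a difference `αᵢ - βᵢ`. Forgetting `n`, the
sizes `k` are thus governed by a product over levels which telescopes to
`(1 - x) P(x)² P(x²)`, where `P(x) = ∏ (1 - xⁱ)⁻¹`.

The coefficient of `x ^ k` is a Cauchy integral over `|z| = e^{-t}`. On the positive axis,
`P(e^{-t}) ≤ √(1 - e^{-t}) e^{π² / 6t}` bounds the product by a multiple of
`t^{5/2} e^{5π² / 12t}`. Away from the axis the factor `∏ |1 - zⁱ|⁻¹` is smaller by
`exp (-∑ (|z|ⁱ - Re zⁱ))`, a Gaussian in the argument of width `t^{3/2}`, so integrating gives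
`t⁴ e^{tk + 5π² / 12t}`. The exponent is minimised at `t = c / (2 √k)`, where it equals `c √k`.
-/

open scoped Real
open Complex (I)
open Filter Topology

/-! ### Steadily decreasing pairs -/

lemma degree_eq_sum_range {M : Type*} [AddCommMonoid M] {f : ℕ →₀ M} {L : ℕ}
    (hf : ∀ i, L ≤ i → f i = 0) : f.degree = ∑ i ∈ range L, f i := by
  refine f.sum_of_support_subset (fun i hi => ?_) (fun _ x => x) (fun _ _ => rfl)
  exact mem_range.2 (not_le.1 fun hLi => Finsupp.mem_support_iff.1 hi (hf i hLi))

lemma eq_of_degree_eq_of_succ_eq {M : Type*} [AddCancelCommMonoid M] {f g : ℕ →₀ M}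
    (hdeg : f.degree = g.degree) (hsucc : ∀ i, f (i + 1) = g (i + 1)) : f = g := by
  have herase : f.erase 0 = g.erase 0 := by
    ext (_ | i) <;> simp [hsucc]
  rw [← Finsupp.single_add_erase 0 f, ← Finsupp.single_add_erase 0 g, herase, map_add, map_add,
    Finsupp.degree_single, Finsupp.degree_single, add_left_inj] at hdeg
  rw [← Finsupp.single_add_erase 0 f, ← Finsupp.single_add_erase 0 g, herase, hdeg]

lemma eq_zero_of_antitone_of_degree_le {f : ℕ →₀ ℕ} (hf : Antitone f) {i : ℕ}
    (hi : f.degree ≤ i) : f i = 0 := by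
  by_contra hne
  have hcard : #(range (i + 1)) • 1 ≤ ∑ j ∈ range (i + 1), f j :=
    card_nsmul_le_sum _ _ _ fun j hj =>
      (Nat.one_le_iff_ne_zero.2 hne).trans (hf (Nat.lt_succ_iff.1 (mem_range.1 hj)))
  have hdeg : ∑ j ∈ range (i + 1), f j ≤ f.degree :=
    sum_le_sum_of_ne_zero fun j _ hj => Finsupp.mem_support_iff.2 hj
  simp only [card_range, smul_eq_mul, mul_one] at hcard
  omega

namespace SteadilyDecreasing

variable {a b : ℕ → ℕ}

lemma antitone_left (h : SteadilyDecreasing a b) : Antitone a :=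
  antitone_nat_of_succ_le fun i => (le_max_left _ _).trans ((h i).trans (min_le_left _ _))

lemma antitone_right (h : SteadilyDecreasing a b) : Antitone b :=
  antitone_nat_of_succ_le fun i => (le_max_right _ _).trans ((h i).trans (min_le_right _ _))

lemma right_succ_le_left (h : SteadilyDecreasing a b) (i : ℕ) : b (i + 1) ≤ a i :=
  (le_max_right _ _).trans ((h i).trans (min_le_left _ _))

end SteadilyDecreasing

/-- The set counted by `bipartitePi m n`. The two monotonicity conditions are omitted because
steady decrease implies them. -/
def steadyPairs (m n : ℕ) : Set ((ℕ →₀ ℕ) × (ℕ →₀ ℕ)) :=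
  {p | SteadilyDecreasing p.1 p.2 ∧ p.1.degree = m ∧ p.2.degree = n}

lemma bipartitePi_eq_ncard_steadyPairs (m n : ℕ) :
    bipartitePi m n = (steadyPairs m n).ncard := by
  rw [← Nat.card_coe_set_eq]
  refine Nat.card_congr (Equiv.subtypeEquivRight fun p => ⟨fun h => h.2.2, fun h => ?_⟩)
  exact ⟨fun i => h.1.antitone_left i.le_succ, fun i => h.1.antitone_right i.le_succ, h⟩

lemma steadyPairs_finite (m n : ℕ) : (steadyPairs m n).Finite := by
  have mem_antidiag {f : ℕ →₀ ℕ} (hf : Antitone f) :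
      f ∈ finsuppAntidiag (range f.degree) f.degree := by
    refine mem_finsuppAntidiag.2 ⟨?_, fun i hi => ?_⟩
    · exact (degree_eq_sum_range fun i => eq_zero_of_antitone_of_degree_le hf).symm
    · by_contra hlt
      exact Finsupp.mem_support_iff.1 hi
        (eq_zero_of_antitone_of_degree_le hf (not_lt.1 fun h => hlt (mem_range.2 h)))
  refine (finite_toSet (finsuppAntidiag (range m) m ×ˢ finsuppAntidiag (range n) n)).subset ?_
  rintro p ⟨hp, rfl, rfl⟩
  exact mem_coe.2 (mem_product.2 ⟨mem_antidiag hp.antitone_left, mem_antidiag hp.antitone_right⟩)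

/-- The pairs in `steadyPairs m n` whose first entry `α₁` cannot be lowered by one, that is,
`α₁ = max α₂ β₂`; indices here start at `0`. -/
def tightPairs (m n : ℕ) : Set ((ℕ →₀ ℕ) × (ℕ →₀ ℕ)) :=
  {p ∈ steadyPairs m n | p.1 0 = max (p.1 1) (p.2 1)}

lemma steadilyDecreasing_and_lt_iff {a a' b : ℕ → ℕ} (hzero : a' 0 = a 0 + 1)
    (hsucc : ∀ i, a' (i + 1) = a (i + 1)) :
    SteadilyDecreasing a' b ∧ max (a' 1) (b 1) < a' 0 ↔ SteadilyDecreasing a b := by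
  have hone : a' 1 = a 1 := hsucc 0
  constructor
  · rintro ⟨hs, hlt⟩ (_ | i)
    · have : max (a' 1) (b 1) ≤ min (a' 0) (b 0) := hs 0
      rw [zero_add]
      omega
    · simpa only [hsucc] using hs (i + 1)
  · intro hs
    have hs0 : max (a 1) (b 1) ≤ min (a 0) (b 0) := hs 0
    refine ⟨?_, by omega⟩
    rintro (_ | i)
    · rw [zero_add]
      omega
    · simpa only [hsucc] using hs (i + 1)

lemma image_add_single_steadyPairs (m n : ℕ) :
    (fun p : (ℕ →₀ ℕ) × (ℕ →₀ ℕ) => (p.1 + Finsupp.single 0 1, p.2)) '' steadyPairs m n =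
      {p ∈ steadyPairs (m + 1) n | max (p.1 1) (p.2 1) < p.1 0} := by
  have hiff (c b : ℕ →₀ ℕ) := steadilyDecreasing_and_lt_iff (a := c) (b := b)
    (a' := (c + Finsupp.single 0 1 : ℕ →₀ ℕ)) (by simp) (by simp)
  ext ⟨a, b⟩
  constructor
  · rintro ⟨⟨c, b⟩, ⟨hs, rfl, rfl⟩, heq⟩
    obtain ⟨rfl, rfl⟩ := Prod.mk.inj heq
    obtain ⟨hs', hlt⟩ := (hiff c b).2 hs
    exact ⟨⟨hs', by simp, rfl⟩, hlt⟩
  · rintro ⟨⟨hs, hm, hn⟩, hlt⟩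
    obtain ⟨c, rfl⟩ : ∃ c, a = c + Finsupp.single 0 1 :=
      ⟨a - Finsupp.single 0 1, (tsub_add_cancel_of_le
        (Finsupp.single_le_iff.2 (Nat.one_le_of_lt hlt))).symm⟩
    have hs' := (hiff c b).1 ⟨hs, hlt⟩
    exact ⟨(c, b), ⟨hs', by simpa using hm, hn⟩, rfl⟩

lemma Dbip_eq_ncard_tightPairs (m n : ℕ) : Dbip m n = (tightPairs m n).ncard := by
  rcases m with _ | m
  · have htight : tightPairs 0 n = steadyPairs 0 n := by
      refine Set.sep_eq_self_iff_mem_true.2 fun p hp => ?_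
      have hzero (i : ℕ) : p.1 i = 0 := Nat.le_zero.1 (hp.2.1 ▸ Finsupp.le_degree i p.1)
      have := hp.1.right_succ_le_left 0
      simp_all
    simp [Dbip, htight, bipartitePi_eq_ncard_steadyPairs]
  · set loose := {p ∈ steadyPairs (m + 1) n | max (p.1 1) (p.2 1) < p.1 0} with hloose
    have hloose_card : loose.ncard = (steadyPairs m n).ncard := by
      rw [hloose, ← image_add_single_steadyPairs]
      refine Set.ncard_image_of_injective _ fun p q hpq => ?_
      simpa [Prod.ext_iff] using hpq
    have hunion : steadyPairs (m + 1) n = loose ∪ tightPairs (m + 1) n := by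
      rw [hloose, tightPairs, ← Set.sep_or]
      refine (Set.sep_eq_self_iff_mem_true.2 fun p hp => ?_).symm
      exact ((hp.1 0).trans (min_le_left _ _)).lt_or_eq.imp id Eq.symm
    have hdisj : Disjoint loose (tightPairs (m + 1) n) :=
      Set.disjoint_left.2 fun p hp hp' => hp.2.ne hp'.2.symm
    have hfin := steadyPairs_finite (m + 1) n
    have hcard := Set.ncard_union_eq hdisj (hfin.subset fun p hp => hp.1)
      (hfin.subset fun p hp => hp.1)
    rw [← hunion, hloose_card] at hcard
    simp [Dbip, bipartitePi_eq_ncard_steadyPairs, hcard]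

/-! ### Encoding tight pairs -/

/-- What level `i` of a steadily decreasing pair adds to the next level: the gap
`min aᵢ bᵢ - max aᵢ₊₁ bᵢ₊₁` and the signed difference `aᵢ - bᵢ`. -/
def levelCode (a b : ℕ → ℕ) (i : ℕ) : ℕ × ℤ :=
  (min (a i) (b i) - max (a (i + 1)) (b (i + 1)), a i - b i)

/-- The contribution of a code at level `i` to the size of the first partition of a tight pair:
raising `max aᵢ bᵢ` by one raises the `i` entries `a₀, …, aᵢ₋₁`, and the gap and the positive part
of the difference also raise `aᵢ`. -/
def levelWeight (i : ℕ) (c : ℕ × ℤ) : ℕ :=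
  (i + 1) * (c.1 + c.2.toNat) + i * (-c.2).toNat

namespace SteadilyDecreasing

variable {a b a' b' : ℕ → ℕ}

lemma levelWeight_levelCode (h : SteadilyDecreasing a b) (i : ℕ) :
    levelWeight i (levelCode a b i) + (i + 1) * max (a (i + 1)) (b (i + 1)) =
      a i + i * max (a i) (b i) := by
  obtain ⟨e, he⟩ := Nat.exists_eq_add_of_le (h i)
  rw [levelWeight, levelCode, he, Nat.add_sub_cancel_left]
  rcases le_total (b i) (a i) with hba | hab
  · obtain ⟨d, hd⟩ := Nat.exists_eq_add_of_le hba
    rw [min_eq_right hba] at he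
    rw [max_eq_left hba, show ((a i : ℤ) - b i).toNat = d by omega,
      show (-((a i : ℤ) - b i)).toNat = 0 by omega, hd, he]
    ring
  · obtain ⟨d, hd⟩ := Nat.exists_eq_add_of_le hab
    rw [min_eq_left hab] at he
    rw [max_eq_right hab, show ((a i : ℤ) - b i).toNat = 0 by omega,
      show (-((a i : ℤ) - b i)).toNat = d by omega, hd, he]
    ring

lemma sum_levelWeight_levelCode (h : SteadilyDecreasing a b) (L : ℕ) :
    ∑ j ∈ range L, levelWeight (j + 1) (levelCode a b (j + 1)) +
        (L + 1) * max (a (L + 1)) (b (L + 1)) =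
      max (a 1) (b 1) + ∑ j ∈ range L, a (j + 1) := by
  induction L with
  | zero => simp
  | succ L ih =>
    have hstep := h.levelWeight_levelCode (L + 1)
    rw [sum_range_succ, sum_range_succ]
    omega

lemma eq_of_levelCode_eq_of_succ_eq (h : SteadilyDecreasing a b) (h' : SteadilyDecreasing a' b')
    {i : ℕ} (hcode : levelCode a b i = levelCode a' b' i)
    (hsucc : a (i + 1) = a' (i + 1) ∧ b (i + 1) = b' (i + 1)) : a i = a' i ∧ b i = b' i := by
  have hle := h i
  have hle' := h' i
  simp only [levelCode, Prod.mk.injEq] at hcode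
  omega

lemma eq_of_levelCode_eq (h : SteadilyDecreasing a b) (h' : SteadilyDecreasing a' b') {L M : ℕ}
    (hLM : L ≤ M) (hcode : ∀ i, L ≤ i → i < M → levelCode a b i = levelCode a' b' i)
    (htail : ∀ i, M ≤ i → a i = a' i ∧ b i = b' i) :
    ∀ i, L ≤ i → a i = a' i ∧ b i = b' i := by
  induction M, hLM using Nat.le_induction with
  | base => exact htail
  | succ M hLM ih =>
    refine ih (fun i hLi hiM => hcode i hLi (by omega)) fun i hMi => ?_
    rcases hMi.eq_or_lt with rfl | hlt
    · exact eq_of_levelCode_eq_of_succ_eq h h' (hcode M hLM M.lt_succ_self) (htail _ le_rfl)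
    · exact htail i hlt

end SteadilyDecreasing

lemma eq_zero_of_mem_steadyPairs {m n : ℕ} {p : (ℕ →₀ ℕ) × (ℕ →₀ ℕ)} (hp : p ∈ steadyPairs m n)
    {i : ℕ} (hi : m < i) : p.1 i = 0 ∧ p.2 i = 0 := by
  obtain ⟨hs, rfl, -⟩ := hp
  obtain ⟨j, rfl⟩ := Nat.exists_eq_succ_of_ne_zero (by omega : i ≠ 0)
  have hj : p.1 j = 0 := eq_zero_of_antitone_of_degree_le hs.antitone_left (by omega)
  exact ⟨Nat.le_zero.1 (hj ▸ hs.antitone_left j.le_succ),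
    Nat.le_zero.1 (hj ▸ hs.right_succ_le_left j)⟩

lemma injOn_levelCode_steadyPairs {m n N : ℕ} (hN : m ≤ N) :
    Set.InjOn (fun p (j : Fin N) => levelCode p.1 p.2 (j + 1)) (steadyPairs m n) := by
  rintro ⟨a, b⟩ hp ⟨a', b'⟩ hq heq
  have hpos : ∀ i, 1 ≤ i → a i = a' i ∧ b i = b' i := by
    refine hp.1.eq_of_levelCode_eq hq.1 (M := N + 1) (by omega) (fun i h1 hi => ?_) fun i hi => ?_
    · obtain ⟨j, rfl⟩ := Nat.exists_eq_succ_of_ne_zero (by omega : i ≠ 0)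
      exact congrFun heq ⟨j, by omega⟩
    · have hpi := eq_zero_of_mem_steadyPairs hp (i := i) (by omega)
      have hqi := eq_zero_of_mem_steadyPairs hq (i := i) (by omega)
      exact ⟨hpi.1.trans hqi.1.symm, hpi.2.trans hqi.2.symm⟩
  have ha : a = a' := eq_of_degree_eq_of_succ_eq (hp.2.1.trans hq.2.1.symm)
    fun i => (hpos (i + 1) (by omega)).1
  have hb : b = b' := eq_of_degree_eq_of_succ_eq (hp.2.2.trans hq.2.2.symm)
    fun i => (hpos (i + 1) (by omega)).2
  rw [ha, hb]

lemma sum_levelWeight_of_mem_tightPairs {m n N : ℕ} {p : (ℕ →₀ ℕ) × (ℕ →₀ ℕ)}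
    (hp : p ∈ tightPairs m n) (hN : m ≤ N) :
    ∑ j : Fin N, levelWeight (j + 1) (levelCode p.1 p.2 (j + 1)) = m := by
  obtain ⟨hmem, htight⟩ := hp
  have hzero {i : ℕ} (hi : m < i) := eq_zero_of_mem_steadyPairs hmem hi
  have hdeg := degree_eq_sum_range (f := p.1) (L := N + 1) fun i hi => (hzero (by omega)).1
  rw [hmem.2.1, sum_range_succ', htight] at hdeg
  have hsum := hmem.1.sum_levelWeight_levelCode N
  rw [(hzero (i := N + 1) (by omega)).1, (hzero (i := N + 1) (by omega)).2, max_self,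
    mul_zero, add_zero] at hsum
  rw [Fin.sum_univ_eq_sum_range (fun j => levelWeight (j + 1) (levelCode p.1 p.2 (j + 1))) N]
  omega

/-- The codes of a single level with entries bounded by `K`. -/
noncomputable def codeBox (K : ℕ) : Finset (ℕ × ℤ) := range (K + 1) ×ˢ Icc (-K : ℤ) K

lemma levelCode_mem_codeBox {m n K : ℕ} {p : (ℕ →₀ ℕ) × (ℕ →₀ ℕ)} (hp : p ∈ steadyPairs m n)
    (hK : m ≤ K) (i : ℕ) : levelCode p.1 p.2 (i + 1) ∈ codeBox K := by
  have ha := hp.2.1 ▸ Finsupp.le_degree i p.1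
  have ha' := hp.2.1 ▸ Finsupp.le_degree (i + 1) p.1
  have hb := hp.1.right_succ_le_left i
  simp only [codeBox, levelCode, mem_product, mem_range, mem_Icc]
  omega

/-- The sequences of `N` level codes with entries bounded by `K` and total weight `k`; the entry
with index `j` describes level `j + 1`. -/
noncomputable def codes (N K k : ℕ) : Finset (Fin N → ℕ × ℤ) :=
  {g ∈ Fintype.piFinset fun _ : Fin N => codeBox K | ∑ j : Fin N, levelWeight (j + 1) (g j) = k}

lemma Dbip_le_card_codes {k N K : ℕ} (n : ℕ) (hN : k ≤ N) (hK : k ≤ K) :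
    Dbip k n ≤ #(codes N K k) := by
  rw [Dbip_eq_ncard_tightPairs, ← Set.ncard_coe_finset, Nat.cast_le]
  refine Set.ncard_le_ncard_of_injOn _ (fun p hp => ?_)
    ((injOn_levelCode_steadyPairs hN).mono fun p hp => hp.1) (finite_toSet _)
  exact mem_coe.2 (mem_filter.2 ⟨Fintype.mem_piFinset.2 fun j => levelCode_mem_codeBox hp.1 hK j,
    sum_levelWeight_of_mem_tightPairs hp hN⟩)

/-! ### Coefficient extraction -/

lemma norm_ofReal_mul_exp_mul_I {x : ℝ} (hx : 0 ≤ x) (θ : ℝ) :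
    ‖(x : ℂ) * Complex.exp (θ * I)‖ = x := by
  rw [norm_mul, Complex.norm_exp_ofReal_mul_I, Complex.norm_of_nonneg hx, mul_one]

lemma integral_exp_int_mul_I (m : ℤ) :
    ∫ θ in (-π)..π, Complex.exp (m * I * θ) = if m = 0 then 2 * (π : ℂ) else 0 := by
  split_ifs with hm
  · simp [hm, two_mul]
  · have hperiodic : Complex.exp (m * I * π) = Complex.exp (m * I * (-π : ℝ)) :=
      Complex.exp_eq_exp_iff_exists_int.2 ⟨m, by push_cast; ring⟩
    rw [integral_exp_mul_complex (by simpa using hm), hperiodic, sub_self, zero_div]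

lemma card_filter_mul_pow_eq_integral {ι : Type*} (s : Finset ι) (w : ι → ℕ) (k : ℕ) (x : ℝ) :
    ((#{i ∈ s | w i = k} * x ^ k * (2 * π) : ℝ) : ℂ) =
      ∫ θ in (-π)..π, (∑ i ∈ s, (x * Complex.exp (θ * I)) ^ w i) * Complex.exp (-(k * θ) * I) := by
  have hexpand (θ : ℝ) :
      (∑ i ∈ s, (x * Complex.exp (θ * I)) ^ w i) * Complex.exp (-(k * θ) * I) =
        ∑ i ∈ s, (x : ℂ) ^ w i * Complex.exp (((w i - k : ℤ) : ℂ) * I * θ) := by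
    rw [sum_mul]
    refine sum_congr rfl fun i _ => ?_
    rw [mul_pow, mul_assoc, ← Complex.exp_nat_mul, ← Complex.exp_add]
    congr 2
    push_cast
    ring
  simp_rw [hexpand]
  rw [intervalIntegral.integral_finsetSum fun i _ =>
    Continuous.intervalIntegrable (by fun_prop) _ _]
  simp_rw [intervalIntegral.integral_const_mul, integral_exp_int_mul_I, sub_eq_zero, Nat.cast_inj]
  rw [card_filter]
  push_cast
  rw [sum_mul, sum_mul]
  refine sum_congr rfl fun i _ => ?_
  split_ifs with hi <;> simp [hi]

lemma card_filter_mul_pow_le_integral_norm {ι : Type*} (s : Finset ι) (w : ι → ℕ) (k : ℕ)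
    {x : ℝ} (hx : 0 ≤ x) :
    #{i ∈ s | w i = k} * x ^ k * (2 * π) ≤
      ∫ θ in (-π)..π, ‖∑ i ∈ s, (x * Complex.exp (θ * I)) ^ w i‖ := by
  have hnonneg : 0 ≤ #{i ∈ s | w i = k} * x ^ k * (2 * π) := by positivity
  rw [← Complex.norm_of_nonneg hnonneg, card_filter_mul_pow_eq_integral]
  refine (intervalIntegral.norm_integral_le_integral_norm (by linarith [Real.pi_pos])).trans_eq
    (intervalIntegral.integral_congr fun θ _ => ?_)
  have hunit : ‖Complex.exp (-(k * θ) * I)‖ = 1 :=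
    mod_cast Complex.norm_exp_ofReal_mul_I (-(k * θ))
  simp only [norm_mul, hunit, mul_one]

lemma card_codes_mul_pow_le_integral_norm (N K k : ℕ) {x : ℝ} (hx : 0 ≤ x) :
    #(codes N K k) * x ^ k * (2 * π) ≤ ∫ θ in (-π)..π,
      ‖∏ j : Fin N, ∑ c ∈ codeBox K, (x * Complex.exp (θ * I)) ^ levelWeight (j + 1) c‖ := by
  simp_rw [prod_univ_sum, prod_pow_eq_pow_sum]
  exact card_filter_mul_pow_le_integral_norm _ _ k hx

/-! ### Bounding a single level -/

lemma one_sub_norm_le_norm_one_sub (z : ℂ) : 1 - ‖z‖ ≤ ‖1 - z‖ := by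
  simpa using norm_sub_norm_le (1 : ℂ) z

lemma ne_one_of_norm_lt_one {z : ℂ} (hz : ‖z‖ < 1) : z ≠ 1 := by
  rintro rfl
  simp at hz

/-- Comparing `-log |1 - z|` with `-log (1 - |z|)` term by term in the Taylor series and keeping
only the first term. -/
lemma one_sub_norm_mul_exp_le_norm_one_sub {z : ℂ} (hz : ‖z‖ < 1) :
    (1 - ‖z‖) * Real.exp (‖z‖ - z.re) ≤ ‖1 - z‖ := by
  have hlog_norm := Real.hasSum_pow_div_log_of_abs_lt_one (x := ‖z‖) (by simpa using hz)
  have hlog : HasSum (fun n : ℕ => (z ^ (n + 1)).re / (n + 1)) (-Real.log ‖1 - z‖) := by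
    have hre := (hasSum_nat_add_iff' 1).2
      (Complex.hasSum_re (Complex.hasSum_taylorSeries_neg_log hz))
    simp only [Complex.div_natCast_re] at hre
    simpa [Complex.log_re] using hre
  have hfirst := sum_le_hasSum {0} (fun n _ => ?_) (hlog_norm.sub hlog)
  · have hpos : 0 < ‖1 - z‖ := (sub_pos.2 hz).trans_le (one_sub_norm_le_norm_one_sub z)
    rw [sum_singleton] at hfirst
    norm_num at hfirst
    rw [← Real.exp_log hpos, ← Real.exp_log (sub_pos.2 hz), ← Real.exp_add, Real.exp_le_exp]
    linarith
  · rw [← sub_div, ← norm_pow]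
    exact div_nonneg (sub_nonneg.2 (Complex.re_le_norm _)) (by positivity)

lemma norm_geom_sum_le {z : ℂ} (hz : ‖z‖ < 1) (n : ℕ) :
    ‖∑ i ∈ range n, z ^ i‖ ≤ (1 + ‖z‖ ^ n) * Real.exp (-(‖z‖ - z.re)) / (1 - ‖z‖) := by
  have hone : 0 < 1 - ‖z‖ := sub_pos.2 hz
  calc ‖∑ i ∈ range n, z ^ i‖ = ‖1 - z ^ n‖ / ‖1 - z‖ := by
        rw [geom_sum_eq (ne_one_of_norm_lt_one hz), norm_div, norm_sub_rev, norm_sub_rev z]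
    _ ≤ (1 + ‖z‖ ^ n) / ((1 - ‖z‖) * Real.exp (‖z‖ - z.re)) := by
        gcongr
        · simpa using norm_sub_le 1 (z ^ n)
        · exact one_sub_norm_mul_exp_le_norm_one_sub hz
    _ = _ := by
        rw [Real.exp_neg]
        field_simp

lemma hasSum_pow_toNat_mul_pow_neg_toNat {A B : ℝ} (hA : |A| < 1) (hB : |B| < 1) :
    HasSum (fun d : ℤ => A ^ d.toNat * B ^ (-d).toNat) ((1 - A * B) / ((1 - A) * (1 - B))) := by
  have hA1 : 1 - A ≠ 0 := by linarith [(abs_lt.1 hA).2]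
  have hB1 : 1 - B ≠ 0 := by linarith [(abs_lt.1 hB).2]
  have hpos : HasSum (fun p : ℕ => A ^ (p : ℤ).toNat * B ^ (-(p : ℤ)).toNat) (1 - A)⁻¹ := by
    simpa using hasSum_geometric_of_abs_lt_one hA
  have hneg_term (q : ℕ) :
      A ^ (-((q : ℤ) + 1)).toNat * B ^ (- -((q : ℤ) + 1)).toNat = B * B ^ q := by
    rw [show (-((q : ℤ) + 1)).toNat = 0 by omega, show (- -((q : ℤ) + 1)).toNat = q + 1 by omega]
    ring
  have hneg := (hasSum_geometric_of_abs_lt_one hB).mul_left B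
  simp only [← hneg_term] at hneg
  have hvalue : (1 - A)⁻¹ + B * (1 - B)⁻¹ = (1 - A * B) / ((1 - A) * (1 - B)) := by
    field_simp
    ring
  exact hvalue ▸ HasSum.of_nat_of_neg_add_one hpos hneg

/-- The generating function `∑ x ^ levelWeight i c` over all codes `c` of level `i`. -/
noncomputable def levelGenFun (x : ℝ) (i : ℕ) : ℝ :=
  (1 - x ^ (2 * i + 1)) / ((1 - x ^ (i + 1)) ^ 2 * (1 - x ^ i))

lemma levelGenFun_nonneg {x : ℝ} (hx : 0 ≤ x) (hx1 : x ≤ 1) (i : ℕ) : 0 ≤ levelGenFun x i := by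
  have hnonneg (n : ℕ) : 0 ≤ 1 - x ^ n := sub_nonneg.2 (pow_le_one₀ hx hx1)
  exact div_nonneg (hnonneg _) (mul_nonneg (sq_nonneg _) (hnonneg _))

lemma sum_codeBox_pow_levelWeight {R : Type*} [CommSemiring R] (z : R) (i K : ℕ) :
    ∑ c ∈ codeBox K, z ^ levelWeight i c = (∑ e ∈ range (K + 1), (z ^ (i + 1)) ^ e) *
      ∑ d ∈ Icc (-K : ℤ) K, (z ^ (i + 1)) ^ d.toNat * (z ^ i) ^ (-d).toNat := by
  rw [codeBox, sum_product, sum_mul_sum]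
  refine sum_congr rfl fun e _ => sum_congr rfl fun d _ => ?_
  rw [levelWeight]
  ring

lemma norm_sum_codeBox_pow_levelWeight_le {z : ℂ} (hz : ‖z‖ < 1) {i : ℕ} (hi : i ≠ 0) (K : ℕ) :
    ‖∑ c ∈ codeBox K, z ^ levelWeight i c‖ ≤
      (1 + ‖z‖ ^ (K + 1)) * Real.exp (-(‖z‖ ^ (i + 1) - (z ^ (i + 1)).re)) *
        levelGenFun ‖z‖ i := by
  have hA : ‖z‖ ^ (i + 1) < 1 := pow_lt_one₀ (norm_nonneg z) hz i.succ_ne_zero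
  have hB : ‖z‖ ^ i < 1 := pow_lt_one₀ (norm_nonneg z) hz hi
  have hgap := norm_geom_sum_le (z := z ^ (i + 1)) (by rwa [norm_pow]) (K + 1)
  have hdiff : ‖∑ d ∈ Icc (-K : ℤ) K, (z ^ (i + 1)) ^ d.toNat * (z ^ i) ^ (-d).toNat‖ ≤
      (1 - ‖z‖ ^ (i + 1) * ‖z‖ ^ i) / ((1 - ‖z‖ ^ (i + 1)) * (1 - ‖z‖ ^ i)) := by
    refine (norm_sum_le _ _).trans ?_
    simp only [norm_mul, norm_pow]
    refine sum_le_hasSum _ (fun d _ => by positivity)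
      (hasSum_pow_toNat_mul_pow_neg_toNat ?_ ?_) <;>
    simpa only [abs_pow, abs_norm]
  have hpow : (‖z‖ ^ (i + 1)) ^ (K + 1) ≤ ‖z‖ ^ (K + 1) :=
    pow_le_pow_left₀ (by positivity) (pow_le_of_le_one (norm_nonneg z) hz.le i.succ_ne_zero) _
  have hA1 : 0 < 1 - ‖z‖ ^ (i + 1) := sub_pos.2 hA
  rw [sum_codeBox_pow_levelWeight, norm_mul]
  rw [norm_pow] at hgap
  calc _ ≤ _ := mul_le_mul hgap hdiff (norm_nonneg _) (by positivity)
    _ = (1 + (‖z‖ ^ (i + 1)) ^ (K + 1)) *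
          Real.exp (-(‖z‖ ^ (i + 1) - (z ^ (i + 1)).re)) * levelGenFun ‖z‖ i := by
        rw [levelGenFun, show 2 * i + 1 = (i + 1) + i by ring, pow_add _ (i + 1) i,
          div_mul_div_comm, mul_div_assoc]
        congr 2
        ring
    _ ≤ _ := by
        gcongr
        exact levelGenFun_nonneg (norm_nonneg z) hz.le i

lemma norm_prod_sum_codeBox_le {z : ℂ} (hz : ‖z‖ < 1) (N K : ℕ) :
    ‖∏ j : Fin N, ∑ c ∈ codeBox K, z ^ levelWeight (j + 1) c‖ ≤
      (1 + ‖z‖ ^ (K + 1)) ^ N *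
        Real.exp (-∑ j ∈ range N, (‖z‖ ^ (j + 2) - (z ^ (j + 2)).re)) *
        ∏ j ∈ range N, levelGenFun ‖z‖ (j + 1) := by
  rw [Fin.prod_univ_eq_prod_range (fun j => ∑ c ∈ codeBox K, z ^ levelWeight (j + 1) c), norm_prod]
  refine (prod_le_prod (fun j _ => norm_nonneg _) fun j _ =>
    norm_sum_codeBox_pow_levelWeight_le hz j.succ_ne_zero K).trans_eq ?_
  rw [prod_mul_distrib, prod_mul_distrib, prod_const, card_range, ← Real.exp_sum,
    sum_neg_distrib]

/-! ### Partition products -/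

/-- The generating function `∏_{i = 1}^{M} (1 - x ^ i)⁻¹` of partitions into parts of size at
most `M`. -/
noncomputable def partsLeGenFun (x : ℝ) (M : ℕ) : ℝ := ∏ j ∈ range M, (1 - x ^ (j + 1))⁻¹

lemma partsLeGenFun_succ (x : ℝ) (M : ℕ) :
    partsLeGenFun x (M + 1) = partsLeGenFun x M * (1 - x ^ (M + 1))⁻¹ :=
  prod_range_succ _ M

section PartitionProducts

variable {x : ℝ} (hx : 0 ≤ x) (hx1 : x < 1)
include hx hx1

lemma one_sub_pow_succ_pos (i : ℕ) : 0 < 1 - x ^ (i + 1) :=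
  sub_pos.2 (pow_lt_one₀ hx hx1 i.succ_ne_zero)

lemma partsLeGenFun_pos (M : ℕ) : 0 < partsLeGenFun x M :=
  prod_pos fun j _ => inv_pos.2 (one_sub_pow_succ_pos hx hx1 j)

lemma monotone_partsLeGenFun : Monotone (partsLeGenFun x) :=
  monotone_nat_of_le_succ fun M => by
    rw [partsLeGenFun_succ]
    refine le_mul_of_one_le_right (partsLeGenFun_pos hx hx1 M).le ?_
    exact (one_le_inv₀ (one_sub_pow_succ_pos hx hx1 M)).2 (sub_le_self 1 (by positivity))

lemma prod_levelGenFun_mul_partsLeGenFun (N : ℕ) :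
    (∏ j ∈ range N, levelGenFun x (j + 1)) * partsLeGenFun x (2 * N + 2) =
      (1 - x) * partsLeGenFun x (N + 1) ^ 2 * partsLeGenFun x N *
        partsLeGenFun (x ^ 2) (N + 1) := by
  induction N with
  | zero =>
    have h1 := (one_sub_pow_succ_pos hx hx1 0).ne'
    have h2 := (one_sub_pow_succ_pos hx hx1 1).ne'
    simp only [partsLeGenFun, prod_range_succ, prod_range_zero]
    norm_num [levelGenFun] at h1 h2 ⊢
    field_simp
    simp
  | succ N ih =>
    have h1 := (one_sub_pow_succ_pos hx hx1 N).ne'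
    have h2 := (one_sub_pow_succ_pos hx hx1 (N + 1)).ne'
    have h3 := (one_sub_pow_succ_pos hx hx1 (2 * N + 2)).ne'
    have h4 := (one_sub_pow_succ_pos hx hx1 (2 * N + 3)).ne'
    calc _ = ((∏ j ∈ range N, levelGenFun x (j + 1)) * partsLeGenFun x (2 * N + 2)) *
          (levelGenFun x (N + 1) * (1 - x ^ (2 * N + 3))⁻¹ * (1 - x ^ (2 * N + 4))⁻¹) := by
          rw [prod_range_succ, show 2 * (N + 1) + 2 = 2 * N + 2 + 1 + 1 by ring,
            partsLeGenFun_succ x (2 * N + 2 + 1), partsLeGenFun_succ x (2 * N + 2)]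
          ring
      _ = _ := by
          rw [ih, partsLeGenFun_succ x (N + 1), partsLeGenFun_succ x N,
            partsLeGenFun_succ (x ^ 2) (N + 1), ← pow_mul, levelGenFun,
            show 2 * (N + 1 + 1) = 2 * N + 4 by ring, show 2 * (N + 1) + 1 = 2 * N + 3 by ring]
          field_simp

lemma prod_levelGenFun_le_partsLeGenFun (N : ℕ) :
    ∏ j ∈ range N, levelGenFun x (j + 1) ≤
      (1 - x) * partsLeGenFun x (N + 1) ^ 2 * partsLeGenFun (x ^ 2) (N + 1) := by
  have hsq_pos : 0 < partsLeGenFun (x ^ 2) (N + 1) :=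
    partsLeGenFun_pos (sq_nonneg x) (pow_lt_one₀ hx hx1 two_ne_zero) _
  have := sub_pos.2 hx1
  refine le_of_mul_le_mul_right ?_ (partsLeGenFun_pos hx hx1 (2 * N + 2))
  calc _ = (1 - x) * partsLeGenFun x (N + 1) ^ 2 * partsLeGenFun (x ^ 2) (N + 1) *
        partsLeGenFun x N := by
        rw [prod_levelGenFun_mul_partsLeGenFun hx hx1]
        ring
    _ ≤ _ := by
        gcongr
        exact monotone_partsLeGenFun hx hx1 (by omega)

lemma sum_range_pow_succ_le (M : ℕ) : ∑ j ∈ range M, x ^ (j + 1) ≤ x / (1 - x) := by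
  rw [div_eq_mul_inv, ← tsum_geometric_of_lt_one hx hx1, ← tsum_mul_left]
  simp_rw [pow_succ']
  exact ((summable_geometric_of_lt_one hx hx1).mul_left x).sum_le_tsum _
    fun j _ => by positivity

lemma hasSum_log_partsLeGenFun (M : ℕ) :
    HasSum (fun m : ℕ => (∑ j ∈ range M, (x ^ (m + 1)) ^ (j + 1)) / (m + 1))
      (Real.log (partsLeGenFun x M)) := by
  have hne : ∀ j ∈ range M, (1 - x ^ (j + 1))⁻¹ ≠ 0 := fun j _ =>
    inv_ne_zero (one_sub_pow_succ_pos hx hx1 j).ne'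
  rw [partsLeGenFun, Real.log_prod hne]
  simp_rw [sum_div, Real.log_inv]
  refine hasSum_sum fun j _ => ?_
  simp_rw [fun m : ℕ => pow_right_comm x (m + 1) (j + 1)]
  refine Real.hasSum_pow_div_log_of_abs_lt_one ?_
  rw [abs_of_nonneg (by positivity)]
  exact pow_lt_one₀ hx hx1 j.succ_ne_zero

end PartitionProducts

lemma exp_neg_div_one_sub_exp_neg_le {s : ℝ} (hs : 0 < s) :
    Real.exp (-s) / (1 - Real.exp (-s)) ≤ 1 / s - Real.exp (-s) / 2 := by
  have hlt : Real.exp (-s) < 1 := Real.exp_lt_one_iff.2 (neg_neg_of_pos hs)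
  have hquad := Real.quadratic_le_exp_of_nonneg hs.le
  have hlin := Real.add_one_le_exp (-s)
  have hinv : Real.exp (-s) * Real.exp s = 1 := by simp [← Real.exp_add]
  have hmain : s * (3 - Real.exp (-s)) ≤ 2 * (Real.exp s - 1) := by nlinarith
  have hscaled := mul_le_mul_of_nonneg_left hmain (Real.exp_pos (-s)).le
  rw [le_sub_iff_add_le, div_add_div _ _ (sub_pos.2 hlt).ne' two_ne_zero,
    div_le_div_iff₀ (by linarith) hs]
  linarith

lemma hasSum_one_div_succ_sq : HasSum (fun m : ℕ => 1 / ((m : ℝ) + 1) ^ 2) (π ^ 2 / 6) := by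
  simpa using (hasSum_nat_add_iff' 1).2 hasSum_zeta_two

section ExpNeg

variable {t : ℝ} (ht : 0 < t)
include ht

lemma log_partsLeGenFun_exp_neg_le (M : ℕ) :
    Real.log (partsLeGenFun (Real.exp (-t)) M) ≤
      π ^ 2 / (6 * t) + Real.log (1 - Real.exp (-t)) / 2 := by
  set x := Real.exp (-t) with hx
  have hx0 : 0 ≤ x := Real.exp_nonneg _
  have hx1 : x < 1 := Real.exp_lt_one_iff.2 (neg_neg_of_pos ht)
  have hlog : HasSum (fun m : ℕ => x ^ (m + 1) / ((m : ℝ) + 1)) (-Real.log (1 - x)) :=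
    Real.hasSum_pow_div_log_of_abs_lt_one (by rwa [abs_of_nonneg hx0])
  have hterm (m : ℕ) : (∑ j ∈ range M, (x ^ (m + 1)) ^ (j + 1)) / ((m : ℝ) + 1) ≤
      1 / ((m : ℝ) + 1) ^ 2 * (1 / t) - x ^ (m + 1) / ((m : ℝ) + 1) / 2 := by
    have hpow : x ^ (m + 1) = Real.exp (-((m + 1) * t)) := by
      rw [hx, ← Real.exp_nat_mul]
      push_cast
      ring_nf
    rw [div_le_iff₀ (by positivity)]
    calc _ ≤ x ^ (m + 1) / (1 - x ^ (m + 1)) :=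
          sum_range_pow_succ_le (by positivity) (pow_lt_one₀ hx0 hx1 m.succ_ne_zero) M
      _ ≤ 1 / ((m + 1) * t) - x ^ (m + 1) / 2 := by
          rw [hpow]
          exact exp_neg_div_one_sub_exp_neg_le (by positivity)
      _ = _ := by field_simp
  refine (hasSum_le hterm (hasSum_log_partsLeGenFun hx0 hx1 M)
    ((hasSum_one_div_succ_sq.mul_right (1 / t)).sub (hlog.div_const 2))).trans_eq ?_
  field_simp
  ring

lemma partsLeGenFun_exp_neg_le (M : ℕ) :
    partsLeGenFun (Real.exp (-t)) M ≤ Real.exp (π ^ 2 / (6 * t)) * √(1 - Real.exp (-t)) := by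
  have hlt : Real.exp (-t) < 1 := Real.exp_lt_one_iff.2 (neg_neg_of_pos ht)
  have hlog := log_partsLeGenFun_exp_neg_le ht M
  rwa [← Real.log_sqrt (sub_pos.2 hlt).le,
    Real.log_le_iff_le_exp (partsLeGenFun_pos (Real.exp_nonneg _) hlt M), Real.exp_add,
    Real.exp_log (Real.sqrt_pos.2 (sub_pos.2 hlt))] at hlog

lemma partsLeGenFun_exp_neg_le_mul_sqrt (M : ℕ) :
    partsLeGenFun (Real.exp (-t)) M ≤ Real.exp (π ^ 2 / (6 * t)) * √t := by
  have hle : 1 - Real.exp (-t) ≤ t := by linarith [Real.add_one_le_exp (-t)]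
  exact (partsLeGenFun_exp_neg_le ht M).trans (by gcongr)

lemma prod_levelGenFun_exp_neg_le (N : ℕ) :
    ∏ j ∈ range N, levelGenFun (Real.exp (-t)) (j + 1) ≤
      √2 * t ^ 2 * √t * Real.exp (5 * π ^ 2 / (12 * t)) := by
  have hlt : Real.exp (-t) < 1 := Real.exp_lt_one_iff.2 (neg_neg_of_pos ht)
  have hone_sub : 1 - Real.exp (-t) ≤ t := by linarith [Real.add_one_le_exp (-t)]
  have hsq : Real.exp (-t) ^ 2 = Real.exp (-(2 * t)) := by
    rw [← Real.exp_nat_mul]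
    push_cast
    ring_nf
  have hpos : 0 < partsLeGenFun (Real.exp (-t)) (N + 1) :=
    partsLeGenFun_pos (Real.exp_nonneg _) hlt _
  calc _ ≤ (1 - Real.exp (-t)) * partsLeGenFun (Real.exp (-t)) (N + 1) ^ 2 *
        partsLeGenFun (Real.exp (-(2 * t))) (N + 1) :=
        hsq ▸ prod_levelGenFun_le_partsLeGenFun (Real.exp_nonneg _) hlt N
    _ ≤ t * (Real.exp (π ^ 2 / (6 * t)) * √t) ^ 2 *
        (Real.exp (π ^ 2 / (6 * (2 * t))) * √(2 * t)) := by
        gcongr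
        · exact (partsLeGenFun_pos (Real.exp_nonneg _) (Real.exp_lt_one_iff.2 (by linarith)) _).le
        · exact partsLeGenFun_exp_neg_le_mul_sqrt ht _
        · exact partsLeGenFun_exp_neg_le_mul_sqrt (by positivity) _
    _ = √2 * t ^ 2 * √t *
        (Real.exp (π ^ 2 / (6 * t)) ^ 2 * Real.exp (π ^ 2 / (6 * (2 * t)))) := by
        rw [mul_pow, Real.sq_sqrt ht.le, Real.sqrt_mul zero_le_two]
        ring
    _ = _ := by
        rw [← Real.exp_nat_mul, ← Real.exp_add]
        congr 2
        field_simp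
        norm_num

end ExpNeg

/-! ### Decay away from the positive real axis -/

lemma geom_sum_eq_one_div_sub {F : Type*} [Field F] {z : F} (hz : z ≠ 1) (n : ℕ) :
    ∑ j ∈ range n, z ^ j = 1 / (1 - z) - z ^ n / (1 - z) := by
  rw [geom_sum_eq hz, ← sub_div, ← neg_div_neg_eq, neg_sub, neg_sub]

section UnitDisc

variable {z : ℂ} (hz : ‖z‖ < 1)
include hz

lemma le_sum_norm_pow_sub_re_pow (N : ℕ) :
    1 / (1 - ‖z‖) - (1 / (1 - z)).re - 2 - 2 * ‖z‖ ^ (N + 2) / (1 - ‖z‖) ≤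
      ∑ j ∈ range N, (‖z‖ ^ (j + 2) - (z ^ (j + 2)).re) := by
  have hsplit : ∑ j ∈ range N, (‖z‖ ^ (j + 2) - (z ^ (j + 2)).re) =
      ∑ j ∈ range (N + 2), ‖z‖ ^ j - (∑ j ∈ range (N + 2), z ^ j).re - (‖z‖ - z.re) := by
    rw [Complex.re_sum, ← sum_sub_distrib, sum_range_succ', sum_range_succ']
    simp
  have htail : -(z ^ (N + 2) / (1 - z)).re ≤ ‖z‖ ^ (N + 2) / (1 - ‖z‖) := by
    calc _ ≤ ‖z ^ (N + 2) / (1 - z)‖ := (neg_le_abs _).trans (Complex.abs_re_le_norm _)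
      _ ≤ _ := by
        rw [norm_div, norm_pow]
        have := sub_pos.2 hz
        gcongr
        exact one_sub_norm_le_norm_one_sub z
  have hfirst : ‖z‖ - z.re ≤ 2 := by
    linarith [neg_le_abs z.re, Complex.abs_re_le_norm z]
  rw [hsplit, geom_sum_eq_one_div_sub hz.ne, geom_sum_eq_one_div_sub (ne_one_of_norm_lt_one hz),
    Complex.sub_re, mul_div_assoc]
  linarith

lemma le_one_div_one_sub_norm_sub_re :
    (‖1 - z‖ ^ 2 - (1 - ‖z‖) ^ 2) / (2 * (1 - ‖z‖) * ‖1 - z‖ ^ 2) ≤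
      1 / (1 - ‖z‖) - (1 / (1 - z)).re := by
  have hu : 0 < 1 - ‖z‖ := sub_pos.2 hz
  have hle := one_sub_norm_le_norm_one_sub z
  have hpos : 0 < ‖1 - z‖ := hu.trans_le hle
  have hgap : 0 ≤ ‖1 - z‖ ^ 2 - (1 - ‖z‖) ^ 2 := sub_nonneg.2 (by gcongr)
  have hexpand : ‖1 - z‖ ^ 2 = 1 + ‖z‖ ^ 2 - 2 * z.re := by
    simp [← Complex.normSq_eq_norm_sq, Complex.normSq_sub]
  have hre : (1 / (1 - z)).re = (‖1 - z‖ ^ 2 + 1 - ‖z‖ ^ 2) / (2 * ‖1 - z‖ ^ 2) := by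
    have hnum : 1 - z.re = (‖1 - z‖ ^ 2 + 1 - ‖z‖ ^ 2) / 2 := by linarith
    rw [one_div, Complex.inv_re, Complex.sub_re, Complex.one_re, Complex.normSq_eq_norm_sq, hnum,
      div_div]
  have hfactor : 1 / (1 - ‖z‖) - (1 / (1 - z)).re =
      (1 + ‖z‖) * ((‖1 - z‖ ^ 2 - (1 - ‖z‖) ^ 2) / (2 * (1 - ‖z‖) * ‖1 - z‖ ^ 2)) := by
    rw [hre]
    field_simp
    ring
  rw [hfactor]
  exact le_mul_of_one_le_left (by positivity) (le_add_of_nonneg_right (norm_nonneg z))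

end UnitDisc

lemma norm_one_sub_mul_exp_mul_I_sq (x θ : ℝ) :
    ‖1 - (x : ℂ) * Complex.exp (θ * I)‖ ^ 2 = (1 - x) ^ 2 + 2 * x * (1 - Real.cos θ) := by
  have hnormSq : Complex.normSq (Complex.exp (θ * I)) = 1 := by
    rw [Complex.normSq_eq_norm_sq, Complex.norm_exp_ofReal_mul_I, one_pow]
  rw [← Complex.normSq_eq_norm_sq, Complex.normSq_sub]
  simp [hnormSq, Complex.exp_ofReal_mul_I_re]
  ring

lemma exp_neg_div_mul_add_le {u w t v : ℝ} (hu : 0 < u) (hut : u ≤ t) (hw : 0 ≤ w)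
    (hv : v ≤ w / 4) :
    Real.exp (-(w / (2 * u * (u ^ 2 + w)))) ≤
      Real.exp (-(v / t ^ 3)) + Real.exp (-(1 / (4 * t))) := by
  have ht : 0 < t := hu.trans_le hut
  rcases le_or_gt w (u ^ 2) with hwu | hwu
  · have hrate : v / t ^ 3 ≤ w / (2 * u * (u ^ 2 + w)) :=
      calc v / t ^ 3 ≤ (w / 4) / t ^ 3 := by gcongr
        _ ≤ (w / 4) / u ^ 3 := by gcongr
        _ = w / (2 * u * (u ^ 2 + u ^ 2)) := by field_simp; ring
        _ ≤ _ := by gcongr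
    exact (Real.exp_le_exp.2 (neg_le_neg hrate)).trans
      (le_add_of_nonneg_right (Real.exp_nonneg _))
  · have hw0 : 0 < w := (sq_nonneg u).trans_lt hwu
    have hrate : 1 / (4 * t) ≤ w / (2 * u * (u ^ 2 + w)) :=
      calc 1 / (4 * t) ≤ 1 / (4 * u) := by gcongr
        _ = w / (2 * u * (w + w)) := by field_simp; norm_num
        _ ≤ _ := by gcongr
    exact (Real.exp_le_exp.2 (neg_le_neg hrate)).trans
      (le_add_of_nonneg_left (Real.exp_nonneg _))

section Decay

variable {t : ℝ} (ht : 0 < t)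
include ht

lemma exp_neg_sum_norm_pow_sub_re_pow_le (N : ℕ) {θ : ℝ} (hθ : |θ| ≤ π) {z : ℂ}
    (hz : z = (Real.exp (-t) : ℝ) * Complex.exp (θ * I)) :
    Real.exp (-∑ j ∈ range N, (‖z‖ ^ (j + 2) - (z ^ (j + 2)).re)) ≤
      Real.exp (2 * ‖z‖ ^ (N + 2) / (1 - ‖z‖)) * (Real.exp 2 *
        (Real.exp (-(Real.exp (-t) / π ^ 2 * θ ^ 2 / t ^ 3)) + Real.exp (-(1 / (4 * t))))) := by
  have hnorm : ‖z‖ = Real.exp (-t) := hz ▸ norm_ofReal_mul_exp_mul_I (Real.exp_nonneg _) θ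
  have hlt : ‖z‖ < 1 := hnorm ▸ Real.exp_lt_one_iff.2 (neg_neg_of_pos ht)
  have hut : 1 - ‖z‖ ≤ t := by linarith [Real.add_one_le_exp (-t)]
  have hS : ‖1 - z‖ ^ 2 = (1 - ‖z‖) ^ 2 + 2 * ‖z‖ * (1 - Real.cos θ) := by
    rw [hnorm, hz, norm_one_sub_mul_exp_mul_I_sq]
  have hcos : 2 / π ^ 2 * θ ^ 2 ≤ 1 - Real.cos θ := by
    linarith [Real.cos_le_one_sub_mul_cos_sq hθ]
  have hw : 0 ≤ 2 * ‖z‖ * (1 - Real.cos θ) :=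
    mul_nonneg (by positivity) (sub_nonneg.2 (Real.cos_le_one θ))
  have hv : Real.exp (-t) / π ^ 2 * θ ^ 2 ≤ 2 * ‖z‖ * (1 - Real.cos θ) / 4 := by
    calc _ = ‖z‖ * (2 / π ^ 2 * θ ^ 2) / 2 := by rw [hnorm]; ring
      _ ≤ ‖z‖ * (1 - Real.cos θ) / 2 := by gcongr
      _ = _ := by ring
  have hsplit := exp_neg_div_mul_add_le (sub_pos.2 hlt) hut hw hv
  have hsum := le_sum_norm_pow_sub_re_pow hlt N
  have hgap := le_one_div_one_sub_norm_sub_re hlt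
  rw [hS, add_sub_cancel_left] at hgap
  grw [← hsplit, ← Real.exp_add, ← Real.exp_add, Real.exp_le_exp]
  linarith

lemma exp_neg_one_div_four_mul_le : Real.exp (-(1 / (4 * t))) ≤ 8 * (t * √t) := by
  have hexp := Real.quadratic_le_exp_of_nonneg (x := 1 / (4 * t)) (by positivity)
  obtain ⟨s, hs, rfl⟩ : ∃ s, 0 < s ∧ t = s ^ 2 :=
    ⟨√t, Real.sqrt_pos.2 ht, (Real.sq_sqrt ht.le).symm⟩
  rw [Real.sqrt_sq hs.le, Real.exp_neg, inv_le_comm₀ (Real.exp_pos _) (by positivity)]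
  refine le_trans ?_ hexp
  rw [← sub_nonneg]
  have hdiff : 1 + 1 / (4 * s ^ 2) + (1 / (4 * s ^ 2)) ^ 2 / 2 - (8 * (s ^ 2 * s))⁻¹ =
      1 + ((2 * s - 1) ^ 2 + 4 * s ^ 2) / (32 * s ^ 4) := by
    field_simp
    ring
  rw [hdiff]
  positivity

lemma integral_exp_neg_mul_sq_div_cube_le {δ : ℝ} (hδ : 0 < δ) :
    ∫ θ in (-π)..π, Real.exp (-(δ * θ ^ 2 / t ^ 3)) ≤ √(π / δ) * (t * √t) := by
  have hrw (θ : ℝ) : -(δ * θ ^ 2 / t ^ 3) = -(δ / t ^ 3) * θ ^ 2 := by ring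
  simp_rw [hrw]
  rw [intervalIntegral.integral_of_le (by linarith [Real.pi_pos])]
  calc _ ≤ ∫ θ : ℝ, Real.exp (-(δ / t ^ 3) * θ ^ 2) :=
        MeasureTheory.setIntegral_le_integral (integrable_exp_neg_mul_sq (by positivity))
          (.of_forall fun θ => Real.exp_nonneg _)
    _ = √(π / δ * (t ^ 2 * t)) := by
        rw [integral_gaussian]
        field_simp
    _ = _ := by
        rw [Real.sqrt_mul (by positivity), Real.sqrt_mul (by positivity), Real.sqrt_sq ht.le]

lemma integral_decay_le :
    ∫ θ in (-π)..π, (Real.exp (-(Real.exp (-t) / π ^ 2 * θ ^ 2 / t ^ 3)) +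
      Real.exp (-(1 / (4 * t)))) ≤ (√(π ^ 3) + 16 * π) * Real.exp t * (t * √t) := by
  have hgauss := integral_exp_neg_mul_sq_div_cube_le ht
    (δ := Real.exp (-t) / π ^ 2) (by positivity)
  have hsqrt : √(π / (Real.exp (-t) / π ^ 2)) ≤ √(π ^ 3) * Real.exp t := by
    have hrw : π / (Real.exp (-t) / π ^ 2) = π ^ 3 * Real.exp t := by
      rw [Real.exp_neg]
      field_simp
    rw [hrw, Real.sqrt_mul (by positivity), ← Real.exp_half]
    gcongr
    linarith
  have hone : 1 ≤ Real.exp t := Real.one_le_exp ht.le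
  rw [intervalIntegral.integral_add (Continuous.intervalIntegrable (by fun_prop) _ _) (by simp),
    intervalIntegral.integral_const, smul_eq_mul]
  calc _ ≤ √(π ^ 3) * Real.exp t * (t * √t) + (π - -π) * (8 * (t * √t)) := by
        gcongr
        · exact hgauss.trans (by gcongr)
        · linarith [Real.pi_pos]
        · exact exp_neg_one_div_four_mul_le ht
    _ = √(π ^ 3) * Real.exp t * (t * √t) + 16 * π * 1 * (t * √t) := by ring
    _ ≤ √(π ^ 3) * Real.exp t * (t * √t) + 16 * π * Real.exp t * (t * √t) := by gcongr
    _ = _ := by ring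

end Decay

/-! ### The upper bound -/

section CircleBound

variable {t : ℝ} (ht : 0 < t)
include ht

lemma norm_prod_sum_codeBox_exp_neg_le (N K : ℕ) {θ : ℝ} (hθ : |θ| ≤ π) :
    ‖∏ j : Fin N, ∑ c ∈ codeBox K,
        ((Real.exp (-t) : ℝ) * Complex.exp (θ * I)) ^ levelWeight (j + 1) c‖ ≤
      (1 + Real.exp (-t) ^ (K + 1)) ^ N *
        Real.exp (2 * Real.exp (-t) ^ (N + 2) / (1 - Real.exp (-t))) *
        (√2 * t ^ 2 * √t * Real.exp (5 * π ^ 2 / (12 * t)) * Real.exp 2 *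
          (Real.exp (-(Real.exp (-t) / π ^ 2 * θ ^ 2 / t ^ 3)) + Real.exp (-(1 / (4 * t))))) := by
  have hlt : Real.exp (-t) < 1 := Real.exp_lt_one_iff.2 (neg_neg_of_pos ht)
  have hosc := exp_neg_sum_norm_pow_sub_re_pow_le ht N hθ rfl
  have hlevels := prod_levelGenFun_exp_neg_le ht N
  have hnonneg : 0 ≤ ∏ j ∈ range N, levelGenFun (Real.exp (-t)) (j + 1) :=
    prod_nonneg fun j _ => levelGenFun_nonneg (Real.exp_nonneg _) hlt.le _
  have hnorm := norm_ofReal_mul_exp_mul_I (Real.exp_nonneg (-t)) θ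
  have hprod := norm_prod_sum_codeBox_le (hnorm.trans_lt hlt) N K
  rw [hnorm] at hosc hprod
  grw [hprod, hosc, hlevels]
  exact le_of_eq (by ring)

lemma card_codes_mul_exp_neg_pow_le (N K k : ℕ) :
    #(codes N K k) * Real.exp (-t) ^ k * (2 * π) ≤
      (1 + Real.exp (-t) ^ (K + 1)) ^ N *
        Real.exp (2 * Real.exp (-t) ^ (N + 2) / (1 - Real.exp (-t))) *
        (√2 * Real.exp 2 * (√(π ^ 3) + 16 * π) * t ^ 4 * Real.exp t *
          Real.exp (5 * π ^ 2 / (12 * t))) := by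
  have hπ := Real.pi_pos
  calc _ ≤ ∫ θ in (-π)..π, ‖∏ j : Fin N, ∑ c ∈ codeBox K,
        ((Real.exp (-t) : ℝ) * Complex.exp (θ * I)) ^ levelWeight (j + 1) c‖ :=
        card_codes_mul_pow_le_integral_norm N K k (Real.exp_nonneg _)
    _ ≤ _ := intervalIntegral.integral_mono_on (by linarith)
        (Continuous.intervalIntegrable (by fun_prop) _ _)
        (Continuous.intervalIntegrable (by fun_prop) _ _)
        fun θ hθ => norm_prod_sum_codeBox_exp_neg_le ht N K (abs_le.2 hθ)
    _ ≤ _ := by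
        rw [intervalIntegral.integral_const_mul, intervalIntegral.integral_const_mul]
        grw [integral_decay_le ht]
        refine le_of_eq (congrArg _ ?_)
        linear_combination (√2 * Real.exp 2 * (√(π ^ 3) + 16 * π) * t ^ 3 * Real.exp t *
          Real.exp (5 * π ^ 2 / (12 * t))) * Real.mul_self_sqrt ht.le

lemma Dbip_mul_exp_neg_pow_le (k n : ℕ) :
    Dbip k n * Real.exp (-t) ^ k * (2 * π) ≤
      √2 * Real.exp 2 * (√(π ^ 3) + 16 * π) * t ^ 4 * Real.exp t *
        Real.exp (5 * π ^ 2 / (12 * t)) := by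
  set x := Real.exp (-t)
  set A := √2 * Real.exp 2 * (√(π ^ 3) + 16 * π) * t ^ 4 * Real.exp t *
    Real.exp (5 * π ^ 2 / (12 * t))
  have hpow : Tendsto (fun i : ℕ => x ^ i) atTop (𝓝 0) :=
    tendsto_pow_atTop_nhds_zero_of_lt_one (Real.exp_nonneg _)
      (Real.exp_lt_one_iff.2 (neg_neg_of_pos ht))
  have htruncated {N K : ℕ} (hN : k ≤ N) (hK : k ≤ K) : Dbip k n * x ^ k * (2 * π) ≤
      (1 + x ^ (K + 1)) ^ N * Real.exp (2 * x ^ (N + 2) / (1 - x)) * A := by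
    have hcard : (Dbip k n : ℝ) ≤ #(codes N K k) := mod_cast Dbip_le_card_codes n hN hK
    grw [hcard]
    exact card_codes_mul_exp_neg_pow_le ht N K k
  have hlevels {N : ℕ} (hN : k ≤ N) : Dbip k n * x ^ k * (2 * π) ≤
      Real.exp (2 * x ^ (N + 2) / (1 - x)) * A := by
    have hlim : Tendsto (fun K : ℕ => (1 + x ^ (K + 1)) ^ N *
        Real.exp (2 * x ^ (N + 2) / (1 - x)) * A) atTop
        (𝓝 ((1 + 0) ^ N * Real.exp (2 * x ^ (N + 2) / (1 - x)) * A)) :=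
      ((((hpow.comp (tendsto_add_atTop_nat 1)).const_add 1).pow N).mul_const _).mul_const A
    rw [add_zero, one_pow, one_mul] at hlim
    exact ge_of_tendsto hlim ((eventually_ge_atTop k).mono fun K => htruncated hN)
  have hlim : Tendsto (fun N : ℕ => Real.exp (2 * x ^ (N + 2) / (1 - x)) * A) atTop
      (𝓝 (Real.exp (2 * 0 / (1 - x)) * A)) :=
    (Real.continuous_exp.continuousAt.tendsto.comp
      (((hpow.comp (tendsto_add_atTop_nat 2)).const_mul 2).div_const (1 - x))).mul_const A
  rw [mul_zero, zero_div, Real.exp_zero, one_mul] at hlim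
  exact ge_of_tendsto hlim ((eventually_ge_atTop k).mono fun N => hlevels)

end CircleBound

lemma exists_Dbip_le_mul_exp : ∃ C > (0 : ℝ), ∀ t : ℝ, 0 < t → ∀ k n : ℕ,
    Dbip k n ≤ C * t ^ 4 * Real.exp t * Real.exp (t * k + 5 * π ^ 2 / (12 * t)) := by
  refine ⟨√2 * Real.exp 2 * (√(π ^ 3) + 16 * π) / (2 * π), by positivity, fun t ht k n => ?_⟩
  have hbound := Dbip_mul_exp_neg_pow_le ht k n
  rw [← Real.exp_nat_mul, mul_neg, Real.exp_neg, ← div_eq_mul_inv, div_mul_eq_mul_div,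
    div_le_iff₀ (Real.exp_pos _), ← le_div_iff₀ (by positivity)] at hbound
  refine hbound.trans_eq ?_
  rw [Real.exp_add, mul_comm t k]
  ring

section SaddlePoint

variable {c : ℝ} (hc : c = 2 * π * √(5 / 12))
include hc

lemma pos_of_eq_two_mul_pi_mul_sqrt : 0 < c := by
  rw [hc]
  positivity

lemma saddle_exponent_eq {k : ℝ} (hk : 0 < k) :
    c / 2 / √k * k + 5 * π ^ 2 / (12 * (c / 2 / √k)) = c * √k := by
  have hcpos := pos_of_eq_two_mul_pi_mul_sqrt hc
  have hcsq : 5 * π ^ 2 = 3 * c ^ 2 := by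
    rw [hc, mul_pow, Real.sq_sqrt (by norm_num)]
    ring
  have hsqrt : 0 < √k := Real.sqrt_pos.2 hk
  have hk_eq : k = √k ^ 2 := (Real.sq_sqrt hk.le).symm
  rw [hcsq]
  generalize √k = s at *
  subst hk_eq
  field_simp
  norm_num

end SaddlePoint

theorem Dbip_upper_bound_general (c : ℝ) (hc : c = 2 * Real.pi * Real.sqrt (5 / 12)) :
    ∃ C > (0 : ℝ), ∀ k n : ℕ, 0 < k →
      ((Dbip k n : ℤ) : ℝ) ≤ C * ((k : ℝ) ^ 2)⁻¹ * Real.exp (c * Real.sqrt k) := by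
  obtain ⟨C, hC, hbound⟩ := exists_Dbip_le_mul_exp
  have hcpos := pos_of_eq_two_mul_pi_mul_sqrt hc
  refine ⟨C * (c / 2) ^ 4 * Real.exp (c / 2), by positivity, fun k n hk => ?_⟩
  have hk1 : (1 : ℝ) ≤ k := mod_cast hk
  have hsqrt : 1 ≤ √k := Real.one_le_sqrt.2 hk1
  have hpow : (c / 2 / √k) ^ 4 = (c / 2) ^ 4 * ((k : ℝ) ^ 2)⁻¹ := by
    rw [div_pow, pow_mul √(k : ℝ) 2 2, Real.sq_sqrt k.cast_nonneg, div_eq_mul_inv]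
  calc (Dbip k n : ℝ) ≤ C * (c / 2 / √k) ^ 4 * Real.exp (c / 2 / √k) *
        Real.exp (c / 2 / √k * k + 5 * π ^ 2 / (12 * (c / 2 / √k))) :=
        hbound _ (by positivity) k n
    _ = C * (c / 2) ^ 4 * Real.exp (c / 2 / √k) * ((k : ℝ) ^ 2)⁻¹ * Real.exp (c * √k) := by
        rw [saddle_exponent_eq hc (by positivity), hpow]
        ring
    _ ≤ _ := by
        gcongr C * (c / 2) ^ 4 * Real.exp ?_ * _ * _
        exact div_le_self (by positivity) hsqrt

/-- there is `C > 0` with `D(k,n) ≤ C·k⁻²·e^{c√k}` for all positive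
integers `k ≤ n`, where `c = 2π√(5/12)`. -/
theorem Dbip_upper_bound (c : ℝ) (hc : c = 2 * Real.pi * Real.sqrt (5 / 12)) :
    ∃ C > (0 : ℝ), ∀ k n : ℕ, 0 < k → 0 < n → k ≤ n →
      ((Dbip k n : ℤ) : ℝ) ≤ C * ((k : ℝ) ^ 2)⁻¹ * Real.exp (c * Real.sqrt k) := by
  obtain ⟨C, hC, hbound⟩ := Dbip_upper_bound_general c hc
  exact ⟨C, hC, fun k n hk _ _ => hbound k n hk⟩
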